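/- arXiv:2206.07335 — 2 statements merged into one kernel-verified Lean document; each statement's English description precedes it below -/
import Mathlib

section
/- Let n ≥ 1 and let J be the standard 2n×2n real symplectic structure matrix (in block form, J = [[0, I_n], [−I_n, 0]]). Let k be a natural number, let M, N : ℝ → Mat_{2n}(ℝ) be families of matrices, and let A, B ∈ Mat_{2n}(ℝ). Assume: (i) M(h)ᵀ · J · M(h) = J for all h; (ii) h^{−(k+1)}·(N(h)ᵀ · J · N(h) − J) → B as h → 0 (h ≠ 0); (iii) h^{−(k+1)}·(M(h) − N(h)) → A as h → 0 (h ≠ 0); (iv) N(h) → I (the identity matrix) as h → 0. Then Aᵀ · J + J · A = −B; in particular, if B ≠ 0 then J·A is not a symmetric matrix. -/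
open Filter Topology Matrix

/-!
Expanding `Mᵀ J M - Nᵀ J N = (M - N)ᵀ J M + Nᵀ J (M - N)`, dividing by `h ^ (k + 1)` and letting
`h → 0`, where `M` and `N` both tend to `1`, the right-hand side tends to `Aᵀ J + J A`. The
left-hand side is `J - Nᵀ J N`, which after the same rescaling tends to `-B`. As `J` is
skew-symmetric, `Aᵀ J + J A` is the difference of `J A` and its transpose.
-/

section Algebra

variable {ι R : Type*}

theorem transpose_fromBlocks_zero_one_neg_one_zero [DecidableEq ι] [Ring R] :
    (fromBlocks 0 1 (-1) 0 : Matrix (ι ⊕ ι) (ι ⊕ ι) R)ᵀ = -fromBlocks 0 1 (-1) 0 := by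
  simp [fromBlocks_transpose, fromBlocks_neg]

theorem transpose_mul_mul_sub_transpose_mul_mul [Fintype ι] [Ring R] (J M N : Matrix ι ι R) :
    Mᵀ * J * M - Nᵀ * J * N = (M - N)ᵀ * J * M + Nᵀ * J * (M - N) := by
  rw [transpose_sub]
  noncomm_ring

theorem isSymm_mul_iff_of_transpose_eq_neg [Fintype ι] [CommRing R] {J : Matrix ι ι R}
    (hJ : Jᵀ = -J) (A : Matrix ι ι R) :
    (J * A).IsSymm ↔ Aᵀ * J + J * A = 0 := by
  rw [IsSymm, transpose_mul, hJ, mul_neg, neg_eq_iff_add_eq_zero]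

end Algebra

section Limits

variable {α 𝕜 : Type*} {l : Filter α} [TopologicalSpace 𝕜]

theorem tendsto_pow_nhdsNE_zero [MonoidWithZero 𝕜] [NoZeroDivisors 𝕜] [ContinuousMul 𝕜] {m : ℕ}
    (hm : m ≠ 0) : Tendsto (fun x : 𝕜 => x ^ m) (𝓝[≠] 0) (𝓝[≠] 0) := by
  refine tendsto_nhdsWithin_iff.2 ⟨?_, ?_⟩
  · exact ((continuous_pow m).tendsto' 0 0 (zero_pow hm)).mono_left nhdsWithin_le_nhds
  · exact eventually_mem_nhdsWithin.mono fun _ hx => pow_ne_zero m hx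

theorem tendsto_matrix_transpose {m n : Type*} {F : α → Matrix m n 𝕜} {X : Matrix m n 𝕜}
    (hF : Tendsto F l (𝓝 X)) : Tendsto (fun h => (F h)ᵀ) l (𝓝 Xᵀ) :=
  (continuous_id.matrix_transpose.tendsto X).comp hF

theorem tendsto_of_tendsto_inv_smul_sub {E : Type*} [DivisionRing 𝕜] [AddCommGroup E] [Module 𝕜 E]
    [TopologicalSpace E] [ContinuousAdd E] [ContinuousSMul 𝕜 E] {ε : α → 𝕜} {f g : α → E} {a b : E}
    (hε : Tendsto ε l (𝓝[≠] 0)) (hfg : Tendsto (fun h => (ε h)⁻¹ • (f h - g h)) l (𝓝 a))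
    (hg : Tendsto g l (𝓝 b)) : Tendsto f l (𝓝 b) := by
  obtain ⟨hε_zero, hε_ne⟩ := tendsto_nhdsWithin_iff.1 hε
  have hsum : Tendsto (fun h => ε h • (ε h)⁻¹ • (f h - g h) + g h) l (𝓝 b) := by
    simpa only [zero_smul, zero_add] using (hε_zero.smul hfg).add hg
  refine hsum.congr' ?_
  filter_upwards [hε_ne] with h hh
  rw [smul_inv_smul₀ hh, sub_add_cancel]

variable {ι : Type*} [Fintype ι] [Field 𝕜] [IsTopologicalRing 𝕜]
  {ε : α → 𝕜} {M N : α → Matrix ι ι 𝕜}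

theorem tendsto_inv_smul_transpose_mul_mul_sub {A P : Matrix ι ι 𝕜} (J : Matrix ι ι 𝕜)
    (hε : Tendsto ε l (𝓝[≠] 0)) (hMN : Tendsto (fun h => (ε h)⁻¹ • (M h - N h)) l (𝓝 A))
    (hN : Tendsto N l (𝓝 P)) :
    Tendsto (fun h => (ε h)⁻¹ • ((M h)ᵀ * J * M h - (N h)ᵀ * J * N h)) l
      (𝓝 (Aᵀ * J * P + Pᵀ * J * A)) := by
  have hM : Tendsto M l (𝓝 P) := tendsto_of_tendsto_inv_smul_sub hε hMN hN
  have hMNt := tendsto_matrix_transpose hMN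
  have hNt := tendsto_matrix_transpose hN
  refine (((hMNt.mul_const J).mul hM).add ((hNt.mul_const J).mul hMN)).congr fun h => ?_
  rw [transpose_mul_mul_sub_transpose_mul_mul, transpose_smul, smul_mul_assoc, smul_mul_assoc,
    mul_smul_comm, smul_add]

theorem stmt6_general [T2Space 𝕜] [DecidableEq ι] [l.NeBot] {A B J : Matrix ι ι 𝕜}
    (hJ : Jᵀ = -J) (hε : Tendsto ε l (𝓝[≠] 0))
    (hM : ∀ᶠ h in l, (M h)ᵀ * J * M h = J)
    (hNdef : Tendsto (fun h => (ε h)⁻¹ • ((N h)ᵀ * J * N h - J)) l (𝓝 B))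
    (hMN : Tendsto (fun h => (ε h)⁻¹ • (M h - N h)) l (𝓝 A))
    (hNI : Tendsto N l (𝓝 1)) :
    Aᵀ * J + J * A = -B ∧ (B ≠ 0 → ¬ (J * A).IsSymm) := by
  have defect_eq : Aᵀ * J + J * A = -B := by
    have hlim := tendsto_inv_smul_transpose_mul_mul_sub J hε hMN hNI
    rw [mul_one, transpose_one, one_mul] at hlim
    refine tendsto_nhds_unique_of_eventuallyEq hlim hNdef.neg ?_
    filter_upwards [hM] with h hMh
    rw [hMh, ← smul_neg, neg_sub]
  refine ⟨defect_eq, fun hB hsymm => hB ?_⟩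
  rw [← neg_eq_zero, ← defect_eq]
  exact (isSymm_mul_iff_of_transpose_eq_neg hJ A).1 hsymm

end Limits

theorem stmt6 {n : ℕ} (hn : 1 ≤ n) (k : ℕ)
    (M N : ℝ → Matrix (Fin n ⊕ Fin n) (Fin n ⊕ Fin n) ℝ)
    (A B J : Matrix (Fin n ⊕ Fin n) (Fin n ⊕ Fin n) ℝ)
    (hJ : J = Matrix.fromBlocks 0 1 (-1) 0)
    (hM : ∀ h : ℝ, (M h)ᵀ * J * M h = J)
    (hNdef : Tendsto (fun h : ℝ => (h ^ (k + 1))⁻¹ • ((N h)ᵀ * J * N h - J)) (𝓝[≠] 0) (𝓝 B))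
    (hMN : Tendsto (fun h : ℝ => (h ^ (k + 1))⁻¹ • (M h - N h)) (𝓝[≠] 0) (𝓝 A))
    (hNI : Tendsto N (𝓝 0) (𝓝 1)) :
    Aᵀ * J + J * A = -B ∧ (B ≠ 0 → ¬ (J * A).IsSymm) :=
  stmt6_general (hJ ▸ transpose_fromBlocks_zero_one_neg_one_zero)
    (tendsto_pow_nhdsNE_zero k.succ_ne_zero) (.of_forall hM) hNdef hMN
    (hNI.mono_left nhdsWithin_le_nhds)
end

section
/- Let D ≥ 1 and equip ℂ^D with the supremum (ℓ∞) norm. Fix a Runge–Kutta method with I stages and real coefficients a_{ij} (1 ≤ i, j ≤ I), and set κ := max_{1≤i≤I} Σ_{j=1}^I |a_{ij}|; assume κ > 0. Let K ⊆ ℂ^D, r, m > 0, let g, ĝ : ℂ^D → ℂ^D be holomorphic on the open r-thickening B(K, r) with ‖g(z)‖ ≤ m and ‖ĝ(z)‖ ≤ m there, let x ∈ K, and let h ∈ ℂ with 0 < |h| ≤ r/(4κm). Let u = (u_1, …, u_I) and v = (v_1, …, v_I) satisfy ‖u_i − x‖ ≤ |h|·κ·m, ‖v_i − x‖ ≤ |h|·κ·m,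 u_i = x + h·Σ_j a_{ij}·ĝ(u_j), and v_i = x + h·Σ_j a_{ij}·g(v_j) for all i. If M ≥ 0 satisfies ‖ĝ(z) − g(z)‖ ≤ M for all z ∈ B(K, |h|·κ·m), then max_{1≤i≤I} ‖u_i − v_i‖ ≤ 2κ·|h|·M. -/
open Filter Topology Metric

/-!
Write `ρ = ‖h‖ κ m`. By Cauchy's estimate `g` is Lipschitz on `closedBall x ρ` with constant
`m / (r - ρ)`, and all stages lie in that ball. Subtracting the two stage equations bounds the
maximum `δ` of the `‖u i - v i‖` by `‖h‖ κ (M + m / (r - ρ) δ)`. As `3 ρ ≤ r`, the factor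
`‖h‖ κ m / (r - ρ) = ρ / (r - ρ)` is at most `1 / 2`, and `δ` can be absorbed on the left.
-/

section CauchyEstimate

variable {E F : Type*} [NormedAddCommGroup E] [NormedAddCommGroup F]

theorem norm_le_of_mem_closedBall_of_forall_mem_ball [NormedSpace ℝ E] {f : E → F} {c : E}
    {R C : ℝ} (hR : R ≠ 0) (hf : ContinuousOn f (closedBall c R))
    (hC : ∀ z ∈ ball c R, ‖f z‖ ≤ C) {z : E} (hz : z ∈ closedBall c R) : ‖f z‖ ≤ C := by
  rw [← closure_ball c hR] at hf hz
  exact le_on_closure hC hf.norm continuousOn_const hz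

variable [NormedSpace ℂ E] [NormedSpace ℂ F] {f : E → F} {c : E} {R C : ℝ}

theorem norm_fderiv_apply_le_of_forall_mem_ball_norm_le (hf : DifferentiableOn ℂ f (ball c R))
    (hC : ∀ z ∈ ball c R, ‖f z‖ ≤ C) {w : E} (hw : ‖w‖ < R) : ‖fderiv ℂ f c w‖ ≤ C := by
  have line_mem {t : ℂ} (ht : t ∈ closedBall 0 1) : c + t • w ∈ ball c R := by
    rw [mem_closedBall_zero_iff] at ht
    rw [mem_ball_iff_norm, add_sub_cancel_left, norm_smul]
    exact (mul_le_of_le_one_left (norm_nonneg w) ht).trans_lt hw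
  have hasDerivAt_line (t : ℂ) : HasDerivAt (fun t : ℂ ↦ c + t • w) w t := by
    simpa using ((hasDerivAt_id t).smul_const w).const_add c
  have hasDerivAt_comp_line {t : ℂ} (ht : t ∈ closedBall 0 1) :
      HasDerivAt (fun t : ℂ ↦ f (c + t • w)) (fderiv ℂ f (c + t • w) w) t :=
    (hf.differentiableAt (isOpen_ball.mem_nhds (line_mem ht))).hasFDerivAt.comp_hasDerivAt t
      (hasDerivAt_line t)
  have diffContOnCl_comp_line : DiffContOnCl ℂ (fun t : ℂ ↦ f (c + t • w)) (ball 0 1) :=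
    DifferentiableOn.diffContOnCl_ball (U := closedBall 0 1)
      (fun t ht ↦ (hasDerivAt_comp_line ht).differentiableAt.differentiableWithinAt) subset_rfl
  have cauchy := Complex.norm_deriv_le_of_forall_mem_sphere_norm_le one_pos diffContOnCl_comp_line
    fun t ht ↦ hC _ (line_mem (sphere_subset_closedBall ht))
  simpa [(hasDerivAt_comp_line (mem_closedBall_self zero_le_one)).deriv] using cauchy

theorem norm_fderiv_le_of_forall_mem_ball_norm_le (hR : 0 < R)
    (hf : DifferentiableOn ℂ f (ball c R)) (hC : ∀ z ∈ ball c R, ‖f z‖ ≤ C) :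
    ‖fderiv ℂ f c‖ ≤ C / R := by
  have apply_le (w : E) (hw : w ∈ closedBall 0 R) : ‖fderiv ℂ f c w‖ ≤ C :=
    norm_le_of_mem_closedBall_of_forall_mem_ball hR.ne' (fderiv ℂ f c).continuous.continuousOn
      (fun z hz ↦ norm_fderiv_apply_le_of_forall_mem_ball_norm_le hf hC (mem_ball_zero_iff.1 hz)) hw
  have C_nonneg : 0 ≤ C := (norm_nonneg _).trans (hC c (mem_ball_self hR))
  refine ContinuousLinearMap.opNorm_le_of_unit_norm (by positivity) fun w hw ↦ ?_
  rw [le_div_iff₀' hR]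
  simpa [norm_smul, abs_of_pos hR, hw] using apply_le (R • w)

theorem norm_image_sub_le_of_forall_mem_ball_norm_le {ρ : ℝ} (hρ : ρ < R)
    (hf : DifferentiableOn ℂ f (ball c R)) (hC : ∀ z ∈ ball c R, ‖f z‖ ≤ C) {p q : E}
    (hp : p ∈ closedBall c ρ) (hq : q ∈ closedBall c ρ) :
    ‖f p - f q‖ ≤ C / (R - ρ) * ‖p - q‖ := by
  have differentiableAt (z : E) (hz : z ∈ closedBall c ρ) : DifferentiableAt ℂ f z :=
    hf.differentiableAt (isOpen_ball.mem_nhds (closedBall_subset_ball hρ hz))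
  have norm_fderiv_le (z : E) (hz : z ∈ closedBall c ρ) : ‖fderiv ℂ f z‖ ≤ C / (R - ρ) := by
    have ball_subset : ball z (R - ρ) ⊆ ball c R :=
      ball_subset_ball' (by linarith [mem_closedBall.1 hz])
    exact norm_fderiv_le_of_forall_mem_ball_norm_le (sub_pos.2 hρ) (hf.mono ball_subset)
      fun y hy ↦ hC y (ball_subset hy)
  exact (convex_closedBall c ρ).norm_image_sub_le_of_norm_fderiv_le differentiableAt
    norm_fderiv_le hq hp

end CauchyEstimate

/-- `v` is a family of stages of the Runge–Kutta method with coefficient matrix `a`, applied to the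
vector field `g` with step `h` from the initial value `x`. This is a predicate and not a function
of the other data because the stages of an implicit method need neither exist nor be unique. -/
def IsRungeKuttaStages {ι 𝕜 E : Type*} [Fintype ι] [AddCommMonoid E] [SMul 𝕜 E]
    (a : ι → ι → 𝕜) (g : E → E) (h : 𝕜) (x : E) (v : ι → E) : Prop :=
  ∀ i, v i = x + h • ∑ j, a i j • g (v j)

namespace IsRungeKuttaStages

variable {ι 𝕜 E : Type*} [Fintype ι] [NormedField 𝕜] [NormedAddCommGroup E] [NormedSpace 𝕜 E]
  {a : ι → ι → 𝕜} {f g : E → E} {h : 𝕜} {x : E} {u v : ι → E} {κ : ℝ}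

theorem norm_sub_le (hu : IsRungeKuttaStages a f h x u) (hv : IsRungeKuttaStages a g h x v)
    {C : ℝ} (hC : ∀ j, ‖f (u j) - g (v j)‖ ≤ C) (i : ι) :
    ‖u i - v i‖ ≤ ‖h‖ * ((∑ j, ‖a i j‖) * C) := by
  have sub_eq : u i - v i = h • ∑ j, a i j • (f (u j) - g (v j)) := by
    rw [hu i, hv i, add_sub_add_left_eq_sub, ← smul_sub, ← Finset.sum_sub_distrib]
    simp only [smul_sub]
  rw [sub_eq, norm_smul, Finset.sum_mul]
  gcongr
  exact norm_sum_le_of_le _ fun j _ ↦ (norm_smul_le _ _).trans (by gcongr; exact hC j)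

theorem norm_sub_le_div (hu : IsRungeKuttaStages a f h x u) (hv : IsRungeKuttaStages a g h x v)
    (hκ : ∀ i, ∑ j, ‖a i j‖ ≤ κ) {L M : ℝ} (hL : 0 ≤ L) (hLκ : ‖h‖ * κ * L < 1)
    (hM : ∀ j, ‖f (u j) - g (u j)‖ ≤ M) (hg : ∀ j, ‖g (u j) - g (v j)‖ ≤ L * ‖u j - v j‖) (i : ι) :
    ‖u i - v i‖ ≤ ‖h‖ * κ * M / (1 - ‖h‖ * κ * L) := by
  have : Nonempty ι := ⟨i⟩
  obtain ⟨k, le_max⟩ := Finite.exists_max fun i ↦ ‖u i - v i‖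
  have M_nonneg : 0 ≤ M := (norm_nonneg _).trans (hM i)
  have field_sub_le (j : ι) : ‖f (u j) - g (v j)‖ ≤ M + L * ‖u k - v k‖ :=
    calc ‖f (u j) - g (v j)‖
      _ ≤ ‖f (u j) - g (u j)‖ + ‖g (u j) - g (v j)‖ := norm_sub_le_norm_sub_add_norm_sub _ _ _
      _ ≤ M + L * ‖u j - v j‖ := add_le_add (hM j) (hg j)
      _ ≤ M + L * ‖u k - v k‖ := by gcongr; exact le_max j
  have max_le : ‖u k - v k‖ ≤ ‖h‖ * (κ * (M + L * ‖u k - v k‖)) :=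
    (hu.norm_sub_le hv field_sub_le k).trans (by gcongr; exact hκ k)
  refine (le_max i).trans ?_
  rw [le_div_iff₀ (sub_pos.2 hLκ)]
  linarith

end IsRungeKuttaStages

theorem stmt10_general {ι E : Type*} [Fintype ι] [NormedAddCommGroup E] [NormedSpace ℂ E]
    {a : ι → ι → ℂ} {κ : ℝ} (hκ : ∀ i, ∑ j, ‖a i j‖ ≤ κ) (hκ_pos : 0 < κ)
    {r m : ℝ} (hm : 0 < m) {g ghat : E → E} {x : E}
    (hg : DifferentiableOn ℂ g (ball x r)) (hgb : ∀ z ∈ ball x r, ‖g z‖ ≤ m)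
    (hghat : ContinuousOn ghat (ball x r))
    {h : ℂ} (hh0 : 0 < ‖h‖) (hh : ‖h‖ ≤ r / (3 * κ * m)) {u v : ι → E}
    (hux : ∀ i, ‖u i - x‖ ≤ ‖h‖ * κ * m) (hvx : ∀ i, ‖v i - x‖ ≤ ‖h‖ * κ * m)
    (hu : IsRungeKuttaStages a ghat h x u) (hv : IsRungeKuttaStages a g h x v)
    {M : ℝ} (hM : ∀ z ∈ ball x (‖h‖ * κ * m), ‖ghat z - g z‖ ≤ M) (i : ι) :
    ‖u i - v i‖ ≤ 2 * κ * ‖h‖ * M := by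
  set ρ := ‖h‖ * κ * m with hρ
  have ρ_pos : 0 < ρ := by positivity
  have three_mul_le : 3 * ρ ≤ r := by
    rw [le_div_iff₀ (by positivity)] at hh
    linarith
  have ρ_lt : ρ < r := by linarith
  have hu_mem (j : ι) : u j ∈ closedBall x ρ := mem_closedBall_iff_norm.2 (hux j)
  have hv_mem (j : ι) : v j ∈ closedBall x ρ := mem_closedBall_iff_norm.2 (hvx j)
  have stage_defect (j : ι) : ‖ghat (u j) - g (u j)‖ ≤ M :=
    norm_le_of_mem_closedBall_of_forall_mem_ball ρ_pos.ne'
      ((hghat.sub hg.continuousOn).mono (closedBall_subset_ball ρ_lt)) hM (hu_mem j)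
  have lipschitz (j : ι) : ‖g (u j) - g (v j)‖ ≤ m / (r - ρ) * ‖u j - v j‖ :=
    norm_image_sub_le_of_forall_mem_ball_norm_le ρ_lt hg hgb (hu_mem j) (hv_mem j)
  have contraction : ‖h‖ * κ * (m / (r - ρ)) ≤ 1 / 2 := by
    rw [← mul_div_assoc, ← hρ, div_le_iff₀ (sub_pos.2 ρ_lt)]
    linarith
  have M_nonneg : 0 ≤ M := (norm_nonneg _).trans (stage_defect i)
  calc ‖u i - v i‖
    _ ≤ ‖h‖ * κ * M / (1 - ‖h‖ * κ * (m / (r - ρ))) :=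
      hu.norm_sub_le_div hv hκ (div_nonneg hm.le (sub_pos.2 ρ_lt).le)
        (contraction.trans_lt one_half_lt_one) stage_defect lipschitz i
    _ ≤ ‖h‖ * κ * M / (1 / 2) := by gcongr; linarith
    _ = 2 * κ * ‖h‖ * M := by ring

theorem stmt10 {D I : ℕ} (hD : 1 ≤ D) (hI : 1 ≤ I)
    (a : Fin I → Fin I → ℝ) (κ : ℝ)
    (hκ : κ = ⨆ i : Fin I, ∑ j : Fin I, |a i j|) (hκpos : 0 < κ)
    (K : Set (Fin D → ℂ)) (r m : ℝ) (hr : 0 < r) (hm : 0 < m)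
    (g ghat : (Fin D → ℂ) → (Fin D → ℂ))
    (hg : DifferentiableOn ℂ g (⋃ y ∈ K, ball y r))
    (hghat : DifferentiableOn ℂ ghat (⋃ y ∈ K, ball y r))
    (hgb : ∀ z ∈ ⋃ y ∈ K, ball y r, ‖g z‖ ≤ m)
    (hghatb : ∀ z ∈ ⋃ y ∈ K, ball y r, ‖ghat z‖ ≤ m)
    (x : Fin D → ℂ) (hx : x ∈ K)
    (h : ℂ) (hh0 : 0 < ‖h‖) (hh : ‖h‖ ≤ r / (4 * κ * m))
    (u v : Fin I → (Fin D → ℂ))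
    (hu1 : ∀ i, ‖u i - x‖ ≤ ‖h‖ * κ * m)
    (hv1 : ∀ i, ‖v i - x‖ ≤ ‖h‖ * κ * m)
    (hu2 : ∀ i, u i = x + h • ∑ j : Fin I, a i j • ghat (u j))
    (hv2 : ∀ i, v i = x + h • ∑ j : Fin I, a i j • g (v j))
    (M : ℝ) (hM : 0 ≤ M)
    (hMb : ∀ z ∈ ⋃ y ∈ K, ball y (‖h‖ * κ * m), ‖ghat z - g z‖ ≤ M) :
    ∀ i, ‖u i - v i‖ ≤ 2 * κ * ‖h‖ * M := by
  have ball_subset (s : ℝ) : ball x s ⊆ ⋃ y ∈ K, ball y s := fun _ hz ↦ Set.mem_biUnion hx hz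
  have row_sum_le (i : Fin I) : ∑ j, ‖(a i j : ℂ)‖ ≤ κ := by
    simpa [hκ] using le_ciSup (Set.finite_range fun i ↦ ∑ j, |a i j|).bddAbove i
  exact stmt10_general row_sum_le hκpos hm (hg.mono (ball_subset r))
    (fun z hz ↦ hgb z (ball_subset r hz)) (hghat.continuousOn.mono (ball_subset r)) hh0
    (hh.trans (by gcongr; norm_num)) hu1 hv1 (by simpa [IsRungeKuttaStages] using hu2)
    (by simpa [IsRungeKuttaStages] using hv2) fun z hz ↦ hMb z (ball_subset _ hz)
end
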